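/- Let σ > 0 and N ≥ 2 an integer, assume Π⁺ is continuously differentiable on (m, M), that the limit Ψ⁺ₓ(M) = lim_{x→M⁻} (d/dx)Ψ⁺(x) exists, and that there exist an integer n ≥ 0 and a real constant k ∈ (0, ∞) such that lim_{x→M⁻} (Ψ⁺(x) − x)/(M − x)^{n+1} = 1/k. Let R : ℝ → [m, M] be a nondecreasing solution of equation (C⁺) with R(x) < M for all x and lim_{x→∞} R(x) = M. Then Π⁺ ∘ R is regularly varying at ∞ of index −Ψ⁺ₓ(M)/(1 − Ψ⁺ₓ(M)/N), i.e. for every x > 0 one has Π⁺(R(αx))/Π⁺(R(α)) → x^{−Ψ⁺ₓ(M)/(1−Ψ⁺ₓ(M)/N)} as α → ∞. -/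

import Mathlib

open MeasureTheory Filter Set

/-- Centered Gaussian density with variance `σ²`. -/
noncomputable def gq (σ z : ℝ) : ℝ :=
  Real.exp (-(z ^ 2) / (2 * σ ^ 2)) / (σ * Real.sqrt (2 * Real.pi))

/-- The averaged kernel `q̄(σ,x,z)`. -/
noncomputable def gqbar (σ x z : ℝ) : ℝ :=
  if x = 0 then gq σ z else (1 / x) * ∫ y in (0:ℝ)..x, gq σ (y - z)

/-- `Φ⁺(y) = E[V·1_{V>y}]`. -/
noncomputable def Phip {Ω : Type*} [MeasurableSpace Ω] (P : Measure Ω) (V : Ω → ℝ) (y : ℝ) : ℝ :=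
  ∫ ω in {ω | V ω > y}, V ω ∂P

/-- `Π⁺(y) = P(V > y)`. -/
noncomputable def Pip {Ω : Type*} [MeasurableSpace Ω] (P : Measure Ω) (V : Ω → ℝ) (y : ℝ) : ℝ :=
  (P {ω | V ω > y}).toReal

/-- `Φ⁻(y) = E[V·1_{V≤y}]`. -/
noncomputable def Phim {Ω : Type*} [MeasurableSpace Ω] (P : Measure Ω) (V : Ω → ℝ) (y : ℝ) : ℝ :=
  ∫ ω in {ω | V ω ≤ y}, V ω ∂P

/-- `Π⁻(y) = P(V ≤ y)`. -/
noncomputable def Pim {Ω : Type*} [MeasurableSpace Ω] (P : Measure Ω) (V : Ω → ℝ) (y : ℝ) : ℝ :=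
  (P {ω | V ω ≤ y}).toReal

/-- `Ψ⁺ = Φ⁺/Π⁺`. -/
noncomputable def Psip {Ω : Type*} [MeasurableSpace Ω] (P : Measure Ω) (V : Ω → ℝ) (y : ℝ) : ℝ :=
  Phip P V y / Pip P V y

/-- `Ψ⁻ = Φ⁻/Π⁻`. -/
noncomputable def Psim {Ω : Type*} [MeasurableSpace Ω] (P : Measure Ω) (V : Ω → ℝ) (y : ℝ) : ℝ :=
  Phim P V y / Pim P V y

/-- `φ⁺_g`. -/
noncomputable def phip {Ω : Type*} [MeasurableSpace Ω] (P : Measure Ω) (V : Ω → ℝ)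
    (σ : ℝ) (g : ℝ → ℝ) (x : ℝ) : ℝ :=
  (∫ z, Phip P V (g z) * gq σ (x - z)) / (∫ z, Pip P V (g z) * gq σ (x - z))

/-- `φ⁻_g`. -/
noncomputable def phim {Ω : Type*} [MeasurableSpace Ω] (P : Measure Ω) (V : Ω → ℝ)
    (σ : ℝ) (g : ℝ → ℝ) (x : ℝ) : ℝ :=
  (∫ z, Phim P V (g z) * gq σ (x - z)) / (∫ z, Pim P V (g z) * gq σ (x - z))

/-- `φ_g`, equal to `φ⁺_g` on `[0,∞)` and `φ⁻_g` on `(−∞,0)`. -/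
noncomputable def phig {Ω : Type*} [MeasurableSpace Ω] (P : Measure Ω) (V : Ω → ℝ)
    (σ : ℝ) (g : ℝ → ℝ) (x : ℝ) : ℝ :=
  if 0 ≤ x then phip P V σ g x else phim P V σ g x

/-- The interior of the support of the law of `V` is `(m, M)` (with `V` bounded). -/
def SuppIoo {Ω : Type*} [MeasurableSpace Ω] (P : Measure Ω) (V : Ω → ℝ) (m M : ℝ) : Prop :=
  m < M ∧ (∀ᵐ ω ∂P, V ω ∈ Set.Icc m M) ∧
    (∀ y < M, 0 < P {ω | V ω > y}) ∧ (∀ y, m < y → 0 < P {ω | V ω ≤ y})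

/-- Equation (E). -/
def SolvesE {Ω : Type*} [MeasurableSpace Ω] (P : Measure Ω) (V : Ω → ℝ)
    (σ : ℝ) (N : ℕ) (F : ℝ → ℝ) : Prop :=
  ∀ x : ℝ, F x =
    ∫ z, ((1 / (N:ℝ)) * gq σ (x - z) + (((N:ℝ) - 1) / (N:ℝ)) * gqbar σ x z) * phig P V σ F z

/-- Equation (C⁺). -/
def SolvesCp {Ω : Type*} [MeasurableSpace Ω] (P : Measure Ω) (V : Ω → ℝ)
    (σ : ℝ) (N : ℕ) (R : ℝ → ℝ) : Prop :=
  ∀ x : ℝ, R x =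
    (∫ z in Set.Ioi (0:ℝ),
      ((1 / (N:ℝ)) * gq σ (x - z) + (((N:ℝ) - 1) / (N:ℝ)) * gqbar σ x z) *
        ∫ y, Psip P V (R y) * gq σ (z - y)) +
    (∫ ω, V ω ∂P) *
      ∫ z in Set.Iio (0:ℝ),
        ((1 / (N:ℝ)) * gq σ (x - z) + (((N:ℝ) - 1) / (N:ℝ)) * gqbar σ x z)


lemma gq_eq {σ : ℝ} (hσ : 0 < σ) (z : ℝ) :
    gq σ z = ProbabilityTheory.gaussianPDFReal 0 (Real.toNNReal (σ ^ 2)) z := by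
  unfold gq ProbabilityTheory.gaussianPDFReal
  rw [Real.coe_toNNReal _ (sq_nonneg σ), sub_zero]
  rw [mul_comm (2 * Real.pi), Real.sqrt_mul (sq_nonneg σ), Real.sqrt_sq hσ.le, div_eq_inv_mul]

lemma gq_nonneg {σ : ℝ} (hσ : 0 < σ) (z : ℝ) : 0 ≤ gq σ z := by
  unfold gq; positivity

lemma gq_cont (σ : ℝ) : Continuous (gq σ) := by
  unfold gq; fun_prop

lemma gq_int {σ : ℝ} (hσ : 0 < σ) : Integrable (gq σ) := by
  have : gq σ = ProbabilityTheory.gaussianPDFReal 0 (Real.toNNReal (σ ^ 2)) := funext (gq_eq hσ)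
  rw [this]; exact ProbabilityTheory.integrable_gaussianPDFReal _ _

lemma gq_one {σ : ℝ} (hσ : 0 < σ) : ∫ z, gq σ z = 1 := by
  have : gq σ = ProbabilityTheory.gaussianPDFReal 0 (Real.toNNReal (σ ^ 2)) := funext (gq_eq hσ)
  rw [this]; refine ProbabilityTheory.integral_gaussianPDFReal_eq_one _ ?_
  exact (Real.toNNReal_pos.2 (by positivity)).ne'

lemma gq_exp_int {σ : ℝ} (hσ : 0 < σ) (a : ℝ) :
    Integrable (fun z => Real.exp (a * z) * gq σ z) := by
  have h : (fun z => Real.exp (a * z) * gq σ z) =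
      fun z => (Real.exp (a ^ 2 * σ ^ 2 / 2)) * gq σ (z - a * σ ^ 2) := by
    funext z
    unfold gq
    rw [← mul_div_assoc, ← mul_div_assoc, ← Real.exp_add, ← Real.exp_add]
    congr 2
    field_simp
    ring
  rw [h]
  exact ((gq_int hσ).comp_sub_right _).const_mul _

/-- Gaussian convolution. -/
noncomputable def gconv (σ : ℝ) (f : ℝ → ℝ) (x : ℝ) : ℝ := ∫ z, f (x - z) * gq σ z

lemma gconv_eq (σ : ℝ) (f : ℝ → ℝ) (x : ℝ) : ∫ y, f y * gq σ (x - y) = gconv σ f x := by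
  unfold gconv
  rw [← integral_sub_left_eq_self (fun y => f y * gq σ (x - y)) volume x]
  simp

lemma gconv_integrable {σ : ℝ} (hσ : 0 < σ) {f : ℝ → ℝ} (hf : Measurable f) {C : ℝ}
    (hC : ∀ y, |f y| ≤ C) (x : ℝ) : Integrable (fun z => f (x - z) * gq σ z) := by
  refine (gq_int hσ).bdd_mul (c := C) ?_ ?_
  · exact (hf.comp (measurable_const.sub measurable_id)).aestronglyMeasurable
  · exact Eventually.of_forall fun z => hC _

lemma gconv_const {σ : ℝ} (hσ : 0 < σ) (a x : ℝ) : gconv σ (fun _ => a) x = a := by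
  unfold gconv
  rw [integral_const_mul, gq_one hσ, mul_one]

lemma gconv_sub {σ : ℝ} (hσ : 0 < σ) {f g : ℝ → ℝ} (hf : Measurable f) (hg : Measurable g) {C D : ℝ}
    (hC : ∀ y, |f y| ≤ C) (hD : ∀ y, |g y| ≤ D) (x : ℝ) :
    gconv σ (fun y => f y - g y) x = gconv σ f x - gconv σ g x := by
  unfold gconv
  simp only [sub_mul]
  exact integral_sub (gconv_integrable hσ hf hC x) (gconv_integrable hσ hg hD x)

lemma gconv_mono {σ : ℝ} (hσ : 0 < σ) {f g : ℝ → ℝ} (hf : Measurable f) (hg : Measurable g) {C D : ℝ}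
    (hC : ∀ y, |f y| ≤ C) (hD : ∀ y, |g y| ≤ D) (x y : ℝ) (h : ∀ z, f (x - z) ≤ g (y - z)) :
    gconv σ f x ≤ gconv σ g y := by
  unfold gconv
  refine integral_mono (gconv_integrable hσ hf hC x) (gconv_integrable hσ hg hD y) ?_
  intro z
  exact mul_le_mul_of_nonneg_right (h z) (gq_nonneg hσ z)

lemma gconv_nonneg {σ : ℝ} (hσ : 0 < σ) {f : ℝ → ℝ} (h : ∀ z, 0 ≤ f z) (x : ℝ) :
    0 ≤ gconv σ f x := by
  unfold gconv
  exact integral_nonneg fun z => mul_nonneg (h _) (gq_nonneg hσ z)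

lemma gconv_le {σ : ℝ} (hσ : 0 < σ) {f : ℝ → ℝ} (hf : Measurable f) {C : ℝ}
    (h0 : ∀ z, 0 ≤ f z) (h : ∀ z, f z ≤ C) (x : ℝ) :
    gconv σ f x ≤ C := by
  rw [← gconv_const hσ C x]
  exact gconv_mono hσ hf measurable_const (C := C) (D := |C|)
    (fun y => by rw [abs_of_nonneg (h0 y)]; exact h y) (fun _ => le_rfl) x x (fun z => h _)

/-- exponential moment -/
noncomputable def gK (σ : ℝ) : ℝ := ∫ z, (Real.exp (1 * z) * gq σ z + Real.exp (-1 * z) * gq σ z)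

lemma gK_nonneg {σ : ℝ} (hσ : 0 < σ) : 0 ≤ gK σ := by
  unfold gK
  refine integral_nonneg fun z => ?_
  have := gq_nonneg hσ z
  positivity

lemma gconv_upper {σ : ℝ} (hσ : 0 < σ) {f : ℝ → ℝ} (hf : Measurable f) {C : ℝ}
    (h0 : ∀ z, 0 ≤ f z) (h : ∀ z, f z ≤ C) (x s a : ℝ) (ha0 : 0 ≤ a)
    (ha : ∀ y, x - s ≤ y → f y ≤ a) :
    gconv σ f x ≤ a + C * gK σ * Real.exp (-s) := by
  have hC0 : 0 ≤ C := (h0 0).trans (h 0)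
  have e1 := gq_exp_int hσ 1
  have e2 := gq_exp_int hσ (-1)
  have e12 : Integrable (fun z => Real.exp (1 * z) * gq σ z + Real.exp (-1 * z) * gq σ z) :=
    e1.add e2
  have key : ∫ z, (a * gq σ z + C * Real.exp (-s) *
      (Real.exp (1 * z) * gq σ z + Real.exp (-1 * z) * gq σ z)) = a + C * gK σ * Real.exp (-s) := by
    rw [integral_add ((gq_int hσ).const_mul _) (e12.const_mul _), integral_const_mul,
      integral_const_mul, gq_one hσ]
    unfold gK
    ring
  rw [← key]
  unfold gconv
  refine integral_mono (gconv_integrable hσ hf (C := C) (fun y => by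
    rw [abs_of_nonneg (h0 y)]; exact h y) x)
    (((gq_int hσ).const_mul _).add (e12.const_mul _)) ?_
  intro z
  have hq := gq_nonneg hσ z
  have h1 : f (x - z) ≤ a + C * Real.exp (-s) * Real.exp (1 * z) := by
    by_cases hz : z ≤ s
    · have := ha (x - z) (by linarith)
      have : 0 ≤ C * Real.exp (-s) * Real.exp (1 * z) := by positivity
      linarith
    · have h2 := h (x - z)
      have h3 : 1 ≤ Real.exp (-s) * Real.exp (1 * z) := by
        rw [← Real.exp_add]; apply Real.one_le_exp; linarith
      nlinarith
  have h4 : 0 ≤ C * Real.exp (-s) * (Real.exp (-1 * z) * gq σ z) := by positivity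
  have := mul_le_mul_of_nonneg_right h1 hq
  simp only
  nlinarith

lemma gconv_lower {σ : ℝ} (hσ : 0 < σ) {f : ℝ → ℝ} (hf : Measurable f) {C : ℝ}
    (h0 : ∀ z, 0 ≤ f z) (h : ∀ z, f z ≤ C) (x s a : ℝ) (haC : a ≤ C)
    (ha : ∀ y, y ≤ x + s → a ≤ f y) :
    a - C * gK σ * Real.exp (-s) ≤ gconv σ f x := by
  have hC0 : 0 ≤ C := (h0 0).trans (h 0)
  have e1 := gq_exp_int hσ 1
  have e2 := gq_exp_int hσ (-1)
  have e12 : Integrable (fun z => Real.exp (1 * z) * gq σ z + Real.exp (-1 * z) * gq σ z) :=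
    e1.add e2
  have key : ∫ z, (a * gq σ z - C * Real.exp (-s) *
      (Real.exp (1 * z) * gq σ z + Real.exp (-1 * z) * gq σ z)) = a - C * gK σ * Real.exp (-s) := by
    rw [integral_sub ((gq_int hσ).const_mul _) (e12.const_mul _), integral_const_mul,
      integral_const_mul, gq_one hσ]
    unfold gK
    ring
  rw [← key]
  unfold gconv
  refine integral_mono (((gq_int hσ).const_mul _).sub (e12.const_mul _))
    (gconv_integrable hσ hf (C := C) (fun y => by
    rw [abs_of_nonneg (h0 y)]; exact h y) x) ?_
  intro z
  have hq := gq_nonneg hσ z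
  have h1 : a - C * Real.exp (-s) * Real.exp (-1 * z) ≤ f (x - z) := by
    by_cases hz : -s ≤ z
    · have := ha (x - z) (by linarith)
      have : 0 ≤ C * Real.exp (-s) * Real.exp (-1 * z) := by positivity
      linarith
    · have h2 := h0 (x - z)
      have h3 : 1 ≤ Real.exp (-s) * Real.exp (-1 * z) := by
        rw [← Real.exp_add]; apply Real.one_le_exp; linarith
      nlinarith
  have h4 : 0 ≤ C * Real.exp (-s) * (Real.exp (1 * z) * gq σ z) := by positivity
  have := mul_le_mul_of_nonneg_right h1 hq
  simp only
  nlinarith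

lemma gconv_antitone {σ : ℝ} (hσ : 0 < σ) {f : ℝ → ℝ} (hf : Antitone f) {C : ℝ}
    (hC : ∀ y, |f y| ≤ C) : Antitone (gconv σ f) := fun x y hxy =>
  gconv_mono hσ hf.measurable hf.measurable hC hC y x fun z => hf (by linarith)

lemma gconv_continuous {σ : ℝ} (hσ : 0 < σ) {f : ℝ → ℝ} (hf : Antitone f) {C : ℝ}
    (hC : ∀ y, |f y| ≤ C) : Continuous (gconv σ f) := by
  rw [continuous_iff_continuousAt]
  intro x
  unfold gconv
  refine continuousAt_of_dominated (bound := fun z => C * gq σ z) ?_ ?_ ?_ ?_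
  · exact Eventually.of_forall fun y => (gconv_integrable hσ hf.measurable hC y).aestronglyMeasurable
  · refine Eventually.of_forall fun y => Eventually.of_forall fun z => ?_
    rw [norm_mul, Real.norm_eq_abs, Real.norm_eq_abs, abs_of_nonneg (gq_nonneg hσ z)]
    exact mul_le_mul_of_nonneg_right (hC _) (gq_nonneg hσ z)
  · exact (gq_int hσ).const_mul _
  · have hc := hf.countable_not_continuousAt
    have h2 : ((fun z => x - z) ⁻¹' {y | ¬ ContinuousAt f y}).Countable :=
      hc.preimage (sub_right_injective)
    have h3 := h2.ae_notMem volume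
    filter_upwards [h3] with z hz
    simp only [mem_preimage, mem_ofPred_eq, not_not] at hz
    refine ContinuousAt.mul ?_ continuousAt_const
    exact ContinuousAt.comp (g := f) (f := fun y => y - z) hz (by fun_prop)

lemma fwd_contr (f : ℝ → ℝ) (l ε : ℝ) (hl0 : 0 ≤ l) (hl : l ≤ 1 / 2) (hε : 0 ≤ ε)
    (h1 : ∀ᶠ x in atTop, f x ≤ l * f (x + √x) + ε) (h2 : ∀ᶠ x in atTop, f x ≤ x) :
    ∀ᶠ x in atTop, f x ≤ 2 * ε := by
  obtain ⟨X, hX⟩ := eventually_atTop.1 (h1.and h2)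
  filter_upwards [eventually_ge_atTop X, eventually_ge_atTop (4 : ℝ)] with x hx hx4
  have key : ∀ j : ℕ, ∀ x, X ≤ x → 4 ≤ x → f x ≤ 2 * ε + (3 / 4 : ℝ) ^ j * x := by
    intro j
    induction j with
    | zero => intro x hx hx4; have := (hX x hx).2; simp; linarith
    | succ j ih =>
      intro x hx hx4
      have hs : √x ≤ x / 2 := by
        rw [Real.sqrt_le_left (by linarith)]; nlinarith
      have hs0 := Real.sqrt_nonneg x
      have h3 := ih (x + √x) (by linarith) (by linarith)
      have h4 := (hX x hx).1
      have h5 : (0:ℝ) < (3 / 4 : ℝ) ^ j := by positivity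
      have h6 : (3 / 4 : ℝ) ^ j * (x + √x) ≤ (3 / 4 : ℝ) ^ j * (3 / 2 * x) := by gcongr; linarith
      have h7 : l * f (x + √x) ≤ l * (2 * ε + (3 / 4 : ℝ) ^ j * (3 / 2 * x)) := by gcongr; linarith
      have h8 : l * (2 * ε + (3 / 4 : ℝ) ^ j * (3 / 2 * x)) ≤
          1 / 2 * (2 * ε + (3 / 4 : ℝ) ^ j * (3 / 2 * x)) := by gcongr
      rw [pow_succ]; nlinarith
  have ht : Tendsto (fun j : ℕ => 2 * ε + (3 / 4 : ℝ) ^ j * x) atTop (nhds (2 * ε + 0 * x)) :=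
    ((tendsto_pow_atTop_nhds_zero_of_lt_one (by norm_num) (by norm_num)).mul_const x).const_add _
  have := ge_of_tendsto' ht (fun j => key j x hx hx4)
  linarith

lemma sub_sqrt_tendsto : Tendsto (fun x : ℝ => x - √x) atTop atTop := by
  refine tendsto_atTop_mono' atTop (f₁ := fun x : ℝ => x / 2) ?_
    (tendsto_id.atTop_div_const (by norm_num))
  filter_upwards [eventually_ge_atTop (4 : ℝ)] with x hx
  have hs : √x ≤ x / 2 := by
    rw [Real.sqrt_le_left (by linarith)]; nlinarith
  linarith

lemma add_sqrt_tendsto : Tendsto (fun x : ℝ => x + √x) atTop atTop :=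
  tendsto_atTop_mono (fun x => by have := Real.sqrt_nonneg x; simp only [id]; linarith) tendsto_id

lemma bwd_contr (f : ℝ → ℝ) (l ε C : ℝ) (hl0 : 0 ≤ l) (hl : l ≤ 1 / 2) (hε : 0 < ε)
    (h1 : ∀ᶠ x in atTop, f x ≤ l * f (x - √x) + ε) (h2 : ∀ᶠ x in atTop, f x ≤ C) :
    ∀ᶠ x in atTop, f x ≤ 3 * ε := by
  have key : ∀ j : ℕ, ∀ᶠ x in atTop, f x ≤ 2 * ε + (1 / 2 : ℝ) ^ j * |C| := by
    intro j
    induction j with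
    | zero => filter_upwards [h2] with x hx; have := le_abs_self C; simp; linarith
    | succ j ih =>
      filter_upwards [h1, sub_sqrt_tendsto.eventually ih] with x hx h3
      have h5 : (0:ℝ) < (1 / 2 : ℝ) ^ j := by positivity
      have h7 : l * f (x - √x) ≤ l * (2 * ε + (1 / 2 : ℝ) ^ j * |C|) := by gcongr
      have h8 : l * (2 * ε + (1 / 2 : ℝ) ^ j * |C|) ≤
          1 / 2 * (2 * ε + (1 / 2 : ℝ) ^ j * |C|) := by gcongr
      rw [pow_succ]; nlinarith
  have ht : Tendsto (fun j : ℕ => 2 * ε + (1 / 2 : ℝ) ^ j * |C|) atTop (nhds (2 * ε + 0 * |C|)) :=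
    ((tendsto_pow_atTop_nhds_zero_of_lt_one (by norm_num) (by norm_num)).mul_const _).const_add _
  obtain ⟨j, hj⟩ := (ht.eventually (gt_mem_nhds (show 2 * ε + 0 * |C| < 3 * ε by linarith))).exists
  filter_upwards [key j] with x hx
  linarith

set_option maxHeartbeats 2000000 in
lemma core_lemma (e B ρ η ν : ℝ → ℝ) (N l κ : ℝ) (p : ℕ) (hl0 : 0 ≤ l) (hl : l ≤ 1 / 2)
    (hκ : 0 ≤ κ)
    (hBpos : ∀ x, 0 < x → 0 < B x)
    (hBanti : ∀ x y, 0 < x → x ≤ y → B y ≤ B x)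
    (hBmono : ∀ x y, 0 < x → x ≤ y → x * B x ≤ y * B y)
    (he0 : ∀ x, 0 < x → 0 ≤ e x) (heB : ∀ x, 0 < x → e x ≤ B x)
    (hρ : ∀ x, 0 < x → ρ x = e x / N + (1 - 1 / N) * B x)
    (hup : ∀ᶠ x in atTop, e x ≤ ρ (x - √x) - η (x - √x) + ν x)
    (hlo : ∀ᶠ x in atTop, ρ (x + √x) - η (x + √x) - ν x ≤ e x)
    (hν : Tendsto (fun x => ν x / B x ^ (p + 1)) atTop (nhds 0))
    (hB : Tendsto (fun x => B x ^ p * √x) atTop atTop)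
    (hη : Tendsto (fun x => η x / B x ^ (p + 1) -
      (κ - (1 / N - l) * ((B x - e x) / B x ^ (p + 1)))) atTop (nhds 0)) :
    Tendsto (fun x => (B x - e x) / B x ^ (p + 1)) atTop (nhds (κ / (1 - l))) := by
  set w : ℝ → ℝ := fun x => (B x - e x) / B x ^ (p + 1) with hw
  have hw0 : ∀ x, 0 < x → 0 ≤ w x := fun x hx =>
    div_nonneg (by linarith [heB x hx]) (pow_pos (hBpos x hx) _).le
  have hwB : ∀ x, 0 < x → B x - e x = w x * B x ^ (p + 1) := fun x hx => by
    rw [hw]; field_simp [(hBpos x hx).ne']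
  set d : ℝ → ℝ := fun x => η x / B x ^ (p + 1) - (κ - (1 / N - l) * w x) with hd
  have hηd : ∀ x, 0 < x → η x = (d x + κ - (1 / N - l) * w x) * B x ^ (p + 1) := fun x hx => by
    rw [hd]; field_simp [(hBpos x hx).ne']; ring
  have hρt : ∀ x, 0 < x → B x - (ρ x - η x) = (l * w x + κ + d x) * B x ^ (p + 1) := fun x hx => by
    have h1 := hwB x hx
    rw [hρ x hx, hηd x hx, show e x = B x - w x * B x ^ (p + 1) by linarith]
    ring
  have hl1 : 0 < 1 - l := by linarith
  set c := κ / (1 - l) with hc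
  have hcl : κ = c - l * c := by rw [hc]; field_simp
  have hc0 : 0 ≤ c := by positivity
  -- small auxiliary
  have hsm : Tendsto (fun x => 1 / (B x ^ p * √x)) atTop (nhds 0) :=
    tendsto_const_nhds.div_atTop hB
  rw [Metric.tendsto_atTop']
  intro ε0 hε0
  set ε := ε0 / 8 with hε
  have hεp : 0 < ε := by positivity
  have hdε := hη.eventually (Metric.ball_mem_nhds 0 (show (0:ℝ) < ε / 4 by positivity))
  have hνε := hν.eventually (Metric.ball_mem_nhds 0 (show (0:ℝ) < ε / 4 by positivity))
  have hsε := hsm.eventually (Metric.ball_mem_nhds 0 (show (0:ℝ) < ε / 8 by positivity))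
  -- forward
  have hF : ∀ᶠ x in atTop, w x - c ≤ l * (w (x + √x) - c) + ε := by
    filter_upwards [hlo, add_sqrt_tendsto.eventually hdε, hνε, hsε, eventually_ge_atTop 4] with
      x h1 h2 h3 h4 hx4
    have hx : 0 < x := by linarith
    have hs := Real.sqrt_pos.2 hx
    have hss := Real.mul_self_sqrt hx.le
    set y := x + √x with hy
    have hy0 : 0 < y := by linarith
    have hxy : x ≤ y := by linarith
    have hBx := hBpos x hx
    have hBy := hBpos y hy0
    have hBp : 0 < B x ^ p := pow_pos hBx _
    have hBp1 : 0 < B x ^ (p + 1) := pow_pos hBx _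
    rw [dist_zero_right, Real.norm_eq_abs, abs_lt] at h2 h3 h4
    have h5 := hρt y hy0
    have hBle : B y ^ (p + 1) ≤ B x ^ (p + 1) := pow_le_pow_left₀ hBy.le (hBanti x y hx hxy) _
    have hν2 : ν x ≤ ε / 4 * B x ^ (p + 1) := by
      have := h3.2; rw [div_lt_iff₀ hBp1] at this; exact this.le
    have hdiff : B x - B y ≤ ε / 4 * B x ^ (p + 1) := by
      have h6 := hBmono x y hx hxy
      have h7 : 1 ≤ ε / 8 * (B x ^ p * √x) := by
        have := h4.2; rw [div_lt_iff₀ (by positivity)] at this; exact this.le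
      -- y (Bx - By) ≤ √x Bx
      have h8 : y * (B x - B y) ≤ √x * B x := by rw [hy] at h6 ⊢; linarith
      have h9 : x * (B x - B y) ≤ √x * B x := by
        have := hBanti x y hx hxy
        nlinarith
      have h10 : √x * (B x - B y) ≤ B x := by
        have : √x * (√x * (B x - B y)) ≤ √x * B x := by rw [← mul_assoc, hss]; exact h9
        exact le_of_mul_le_mul_left this hs
      have h11 : B x ≤ ε / 8 * (B x ^ p * √x) * B x := by nlinarith
      have h12 : √x * (B x - B y) ≤ √x * (ε / 8 * B x ^ (p + 1)) := by
        rw [pow_succ]; nlinarith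
      have := le_of_mul_le_mul_left h12 hs
      nlinarith
    have hfin : w x * B x ^ (p + 1) ≤ (l * w y + κ + ε) * B x ^ (p + 1) := by
      rw [← hwB x hx]
      have hwy := hw0 y hy0
      have h13 : (l * w y + κ + d y) * B y ^ (p + 1) ≤ (l * w y + κ + ε / 4) * B x ^ (p + 1) := by
        have : 0 < B y ^ (p + 1) := pow_pos hBy _
        calc _ ≤ (l * w y + κ + ε / 4) * B y ^ (p + 1) := by gcongr; exact h2.2.le
          _ ≤ _ := by gcongr
      nlinarith
    have := le_of_mul_le_mul_right hfin hBp1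
    rw [hcl] at this
    linarith
  have hBk : ∀ᶠ x in atTop, -(w x - c) ≤ l * (-(w (x - √x) - c)) + ε := by
    filter_upwards [hup, sub_sqrt_tendsto.eventually hdε, hνε, hsε, eventually_ge_atTop 4] with
      x h1 h2 h3 h4 hx4
    have hx : 0 < x := by linarith
    have hs := Real.sqrt_pos.2 hx
    have hss := Real.mul_self_sqrt hx.le
    have hs2 : √x ≤ x / 2 := by
      rw [Real.sqrt_le_left (by linarith)]; nlinarith
    set y := x - √x with hy
    have hy0 : 0 < y := by linarith
    have hxy : y ≤ x := by linarith
    have hBx := hBpos x hx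
    have hBy := hBpos y hy0
    have hBp : 0 < B x ^ p := pow_pos hBx _
    have hBp1 : 0 < B x ^ (p + 1) := pow_pos hBx _
    have hBy1 : 0 < B y ^ (p + 1) := pow_pos hBy _
    rw [dist_zero_right, Real.norm_eq_abs, abs_lt] at h2 h3 h4
    have h5 := hρt y hy0
    have hBle : B x ^ (p + 1) ≤ B y ^ (p + 1) := pow_le_pow_left₀ hBx.le (hBanti y x hy0 hxy) _
    have hν2 : ν x ≤ ε / 4 * B x ^ (p + 1) := by
      have := h3.2; rw [div_lt_iff₀ hBp1] at this; exact this.le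
    have hdiff : B y - B x ≤ ε / 4 * B x ^ (p + 1) := by
      have h6 := hBmono y x hy0 hxy
      have h7 : 1 ≤ ε / 8 * (B x ^ p * √x) := by
        have := h4.2; rw [div_lt_iff₀ (by positivity)] at this; exact this.le
      have h8 : y * (B y - B x) ≤ √x * B x := by
        have : x = y + √x := by rw [hy]; ring
        nlinarith
      have h9 : x * (B y - B x) ≤ √x * (2 * B x) := by
        have := hBanti y x hy0 hxy
        nlinarith
      have h10 : √x * (B y - B x) ≤ 2 * B x := by
        have : √x * (√x * (B y - B x)) ≤ √x * (2 * B x) := by rw [← mul_assoc, hss]; exact h9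
        exact le_of_mul_le_mul_left this hs
      have h11 : B x ≤ ε / 8 * (B x ^ p * √x) * B x := by nlinarith
      have h12 : √x * (B y - B x) ≤ √x * (ε / 4 * B x ^ (p + 1)) := by
        rw [pow_succ]; nlinarith
      exact le_of_mul_le_mul_left h12 hs
    have hfin : (l * w y + κ - ε) * B x ^ (p + 1) ≤ w x * B x ^ (p + 1) := by
      rw [← hwB x hx]
      have hwy := hw0 y hy0
      by_cases hneg : l * w y + κ - ε / 4 ≤ 0
      · have : (l * w y + κ - ε) * B x ^ (p + 1) ≤ 0 :=
          mul_nonpos_of_nonpos_of_nonneg (by linarith) hBp1.le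
        linarith [heB x hx]
      have h13 : (l * w y + κ - ε / 4) * B x ^ (p + 1) ≤ (l * w y + κ + d y) * B y ^ (p + 1) := by
        push Not at hneg
        calc _ ≤ (l * w y + κ - ε / 4) * B y ^ (p + 1) := by gcongr
          _ ≤ _ := by gcongr; linarith [h2.1]
      nlinarith
    have := le_of_mul_le_mul_right hfin hBp1
    rw [hcl] at this
    linarith
  have hwx : ∀ᶠ x in atTop, w x - c ≤ x := by
    filter_upwards [hB.eventually_ge_atTop 1, eventually_ge_atTop 4] with x h1 hx4
    have hx : 0 < x := by linarith
    have hBx := hBpos x hx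
    have hs := Real.sqrt_nonneg x
    have hs2 : √x ≤ x / 2 := by
      rw [Real.sqrt_le_left (by linarith)]; nlinarith
    have : w x ≤ √x := by
      rw [hw]; simp only
      rw [div_le_iff₀ (pow_pos hBx _), pow_succ]
      nlinarith [he0 x hx]
    linarith
  have r1 := fwd_contr (fun x => w x - c) l ε hl0 hl hεp.le hF hwx
  have r2 := bwd_contr (fun x => -(w x - c)) l ε c hl0 hl hεp hBk (by
    filter_upwards [eventually_gt_atTop 0] with x hx
    have := hw0 x hx
    linarith)
  obtain ⟨X, hX⟩ := eventually_atTop.1 (r1.and r2)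
  refine ⟨X, fun x hx => ?_⟩
  have := hX x hx.le
  rw [Real.dist_eq, abs_lt]
  constructor <;> [linarith [this.2]; linarith [this.1]]

section PsiFacts

variable {Ω : Type*} [MeasurableSpace Ω] {P : Measure Ω} [IsProbabilityMeasure P] {V : Ω → ℝ}

lemma Pip_sub (hVm : Measurable V) {a b : ℝ} (hab : a ≤ b) :
    Pip P V a - Pip P V b = P.real {ω | a < V ω ∧ V ω ≤ b} := by
  have h : {ω | V ω > a} = {ω | a < V ω ∧ V ω ≤ b} ∪ {ω | V ω > b} := by
    ext ω; simp only [gt_iff_lt, mem_union, mem_ofPred_eq]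
    constructor
    · intro h; by_cases hb : V ω ≤ b
      · left; exact ⟨h, hb⟩
      · right; linarith
    · rintro (h | h)
      · exact h.1
      · linarith
  have hd : Disjoint {ω | a < V ω ∧ V ω ≤ b} {ω | V ω > b} := by
    rw [Set.disjoint_left]; intro ω h1 h2
    simp only [mem_ofPred_eq] at h1 h2; linarith [h1.2]
  have hm : MeasurableSet {ω | V ω > b} := measurableSet_lt measurable_const hVm
  have := measureReal_union (μ := P) hd hm
  unfold Pip
  change P.real _ - P.real _ = _
  rw [h, this]; ring

lemma Phip_sub (hVm : Measurable V) (hV : Integrable V P) {a b : ℝ} (hab : a ≤ b) :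
    Phip P V a - Phip P V b = ∫ ω in {ω | a < V ω ∧ V ω ≤ b}, V ω ∂P := by
  have h : {ω | V ω > a} = {ω | a < V ω ∧ V ω ≤ b} ∪ {ω | V ω > b} := by
    ext ω; simp only [gt_iff_lt, mem_union, mem_ofPred_eq]
    constructor
    · intro h; by_cases hb : V ω ≤ b
      · left; exact ⟨h, hb⟩
      · right; linarith
    · rintro (h | h)
      · exact h.1
      · linarith
  have hd : Disjoint {ω | a < V ω ∧ V ω ≤ b} {ω | V ω > b} := by
    rw [Set.disjoint_left]; intro ω h1 h2
    simp only [mem_ofPred_eq] at h1 h2; linarith [h1.2]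
  have hm : MeasurableSet {ω | V ω > b} := measurableSet_lt measurable_const hVm
  unfold Phip
  rw [h, setIntegral_union hd hm hV.integrableOn hV.integrableOn]; ring

lemma Phip_diff_bounds (hVm : Measurable V) (hV : Integrable V P) {a b : ℝ} (hab : a ≤ b) :
    a * (Pip P V a - Pip P V b) ≤ Phip P V a - Phip P V b ∧
    Phip P V a - Phip P V b ≤ b * (Pip P V a - Pip P V b) := by
  rw [Pip_sub hVm hab, Phip_sub hVm hV hab]
  have hm : MeasurableSet {ω | a < V ω ∧ V ω ≤ b} :=
    (measurableSet_lt measurable_const hVm).inter (measurableSet_le hVm measurable_const)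
  have hc : ∀ c : ℝ, c * P.real {ω | a < V ω ∧ V ω ≤ b} =
      ∫ ω in {ω | a < V ω ∧ V ω ≤ b}, c ∂P := by
    intro c; rw [setIntegral_const, smul_eq_mul, mul_comm]
  rw [hc a, hc b]
  constructor
  · exact setIntegral_mono_on (integrable_const _).integrableOn hV.integrableOn hm
      (fun ω h => h.1.le)
  · exact setIntegral_mono_on hV.integrableOn (integrable_const _).integrableOn hm
      (fun ω h => h.2)

lemma Pip_anti (hVm : Measurable V) {a b : ℝ} (hab : a ≤ b) : Pip P V b ≤ Pip P V a := by
  have := Pip_sub (P := P) hVm hab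
  have h2 : 0 ≤ P.real {ω | a < V ω ∧ V ω ≤ b} := measureReal_nonneg
  linarith

lemma Phip_bounds (hVm : Measurable V) (hV : Integrable V P) {m M : ℝ} (hs : SuppIoo P V m M)
    (y : ℝ) : y * Pip P V y ≤ Phip P V y ∧ Phip P V y ≤ M * Pip P V y := by
  have hm : MeasurableSet {ω | V ω > y} := measurableSet_lt measurable_const hVm
  have hc : ∀ c : ℝ, c * Pip P V y = ∫ ω in {ω | V ω > y}, c ∂P := by
    intro c; rw [setIntegral_const, smul_eq_mul, mul_comm]; rfl
  rw [hc y, hc M]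
  unfold Phip
  constructor
  · exact setIntegral_mono_on (integrable_const _).integrableOn hV.integrableOn hm
      (fun ω h => le_of_lt h)
  · refine setIntegral_mono_ae hV.integrableOn (integrable_const _).integrableOn ?_
    filter_upwards [hs.2.1] with ω h using h.2

lemma Pip_pos {m M : ℝ} (hs : SuppIoo P V m M) {y : ℝ} (hy : y < M) : 0 < Pip P V y :=
  ENNReal.toReal_pos (hs.2.2.1 y hy).ne' (measure_ne_top _ _)

lemma Psip_bounds (hVm : Measurable V) (hV : Integrable V P) {m M : ℝ} (hs : SuppIoo P V m M)
    {y : ℝ} (hy : y < M) : y ≤ Psip P V y ∧ Psip P V y ≤ M := by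
  have h := Phip_bounds hVm hV hs y
  have hp := Pip_pos hs hy
  unfold Psip
  rw [le_div_iff₀ hp, div_le_iff₀ hp]
  exact h

lemma Psip_mono (hVm : Measurable V) (hV : Integrable V P) {m M : ℝ} (hs : SuppIoo P V m M)
    {a b : ℝ} (hab : a ≤ b) (hb : b < M) : Psip P V a ≤ Psip P V b := by
  have hpb := Pip_pos hs hb
  have hpa := Pip_pos hs (hab.trans_lt hb)
  have h1 := (Psip_bounds hVm hV hs hb).1
  have h2 := (Phip_diff_bounds (P := P) hVm hV hab).2
  have h3 := Pip_anti (P := P) hVm hab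
  have h4 : Phip P V b = Psip P V b * Pip P V b := by unfold Psip; field_simp
  rw [show Psip P V a = Phip P V a / Pip P V a from rfl, div_le_iff₀ hpa]
  nlinarith

lemma Psip_ge_mean (hVm : Measurable V) (hV : Integrable V P) {m M : ℝ} (hs : SuppIoo P V m M)
    {y : ℝ} (hy : y < M) : ∫ ω, V ω ∂P ≤ Psip P V y := by
  set a := min m y - 1 with ha
  have ham : a < m := by have := min_le_left m y; linarith
  have hay : a ≤ y := by have := min_le_right m y; linarith
  have h1 : {ω | V ω > a} =ᵐ[P] (univ : Set Ω) := by
    filter_upwards [hs.2.1] with ω h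
    apply propext
    change V ω > a ↔ True
    have := h.1
    simp only [iff_true]; linarith
  have h2 : Psip P V a = ∫ ω, V ω ∂P := by
    unfold Psip Phip Pip
    rw [setIntegral_congr_set h1, measure_congr h1]
    simp
  rw [← h2]
  exact Psip_mono hVm hV hs hay hy

lemma Phip_hasDeriv (hVm : Measurable V) (hV : Integrable V P) {y d : ℝ}
    (hd : HasDerivAt (Pip P V) d y) : HasDerivAt (Phip P V) (y * d) y := by
  have h0 : HasDerivAt (fun x => Phip P V x - y * Pip P V x) 0 y := by
    rw [hasDerivAt_iff_isLittleO]
    have hc : Tendsto (fun x => Pip P V x - Pip P V y) (nhds y) (nhds 0) := by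
      have := hd.continuousAt.tendsto.sub_const (Pip P V y)
      simpa using this
    have h1 : (fun x => (Pip P V x - Pip P V y) * (x - y)) =o[nhds y] fun x => x - y := by
      have := ((Asymptotics.isLittleO_one_iff ℝ).2 hc).mul_isBigO
        (Asymptotics.isBigO_refl (fun x => x - y) (nhds y))
      simpa using this
    refine Asymptotics.IsBigO.trans_isLittleO ?_ h1
    refine Asymptotics.IsBigO.of_bound 1 (Eventually.of_forall fun x => ?_)
    rw [one_mul, norm_mul, Real.norm_eq_abs, Real.norm_eq_abs, Real.norm_eq_abs]
    simp only [smul_zero, sub_zero]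
    rcases le_total x y with h | h
    · have h2 := Phip_diff_bounds (P := P) hVm hV h
      have h3 := Pip_anti (P := P) hVm h
      rw [abs_of_nonneg (show 0 ≤ Pip P V x - Pip P V y by linarith),
        abs_of_nonpos (show x - y ≤ 0 by linarith), abs_le]
      constructor <;> nlinarith
    · have h2 := Phip_diff_bounds (P := P) hVm hV h
      have h3 := Pip_anti (P := P) hVm h
      rw [abs_of_nonpos (show Pip P V x - Pip P V y ≤ 0 by linarith),
        abs_of_nonneg (show 0 ≤ x - y by linarith), abs_le]
      constructor <;> nlinarith
  have := h0.add (hd.const_mul y)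
  simp only [zero_add] at this
  refine this.congr_of_eventuallyEq (Eventually.of_forall fun x => ?_)
  simp

lemma Psip_hasDeriv (hVm : Measurable V) (hV : Integrable V P) {m M : ℝ} (hs : SuppIoo P V m M)
    {y d : ℝ} (hy : y < M) (hd : HasDerivAt (Pip P V) d y) :
    HasDerivAt (Psip P V) (-(d / Pip P V y) * (Psip P V y - y)) y := by
  have hp := Pip_pos hs hy
  have := (Phip_hasDeriv hVm hV hd).div hd hp.ne'
  refine HasDerivAt.congr_deriv this ?_
  unfold Psip
  field_simp
  ring

lemma Pip_hasDeriv {m M : ℝ} (hC1 : ContDiffOn ℝ 1 (Pip P V) (Set.Ioo m M)) {y : ℝ}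
    (hy : y ∈ Ioo m M) : HasDerivAt (Pip P V) (deriv (Pip P V) y) y :=
  ((hC1.differentiableOn (by norm_num)).differentiableAt (Ioo_mem_nhds hy.1 hy.2)).hasDerivAt

lemma Ioo_ev {m M : ℝ} (hs : m < M) : ∀ᶠ y in nhdsWithin M (Iio M), y ∈ Ioo m M :=
  Ioo_mem_nhdsLT hs

lemma Psip_tendsto (hVm : Measurable V) (hV : Integrable V P) {m M : ℝ} (hs : SuppIoo P V m M) :
    Tendsto (Psip P V) (nhdsWithin M (Iio M)) (nhds M) := by
  have h1 : Tendsto (fun y : ℝ => y) (nhdsWithin M (Iio M)) (nhds M) := tendsto_nhdsWithin_of_tendsto_nhds tendsto_id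
  refine tendsto_of_tendsto_of_tendsto_of_le_of_le' h1 tendsto_const_nhds ?_ ?_
  · filter_upwards [self_mem_nhdsWithin] with y hy using (Psip_bounds hVm hV hs hy).1
  · filter_upwards [self_mem_nhdsWithin] with y hy using (Psip_bounds hVm hV hs hy).2

lemma slope_tendsto (hVm : Measurable V) (hV : Integrable V P) {m M : ℝ} (hs : SuppIoo P V m M)
    (hC1 : ContDiffOn ℝ 1 (Pip P V) (Set.Ioo m M))
    (L : ℝ) (hL : Tendsto (deriv (Psip P V)) (nhdsWithin M (Set.Iio M)) (nhds L)) :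
    Tendsto (fun y => (M - Psip P V y) / (M - y)) (nhdsWithin M (Iio M)) (nhds L) := by
  have h1 : Tendsto (fun y : ℝ => y) (nhdsWithin M (Iio M)) (nhds M) :=
    tendsto_nhdsWithin_of_tendsto_nhds tendsto_id
  refine HasDerivAt.lhopital_zero_nhdsLT (f' := fun y => - deriv (Psip P V) y)
    (g' := fun _ => -1) ?_ ?_ ?_ ?_ ?_ ?_
  · filter_upwards [Ioo_ev hs.1] with y hy
    have := (Psip_hasDeriv hVm hV hs hy.2 (Pip_hasDeriv hC1 hy)).differentiableAt.hasDerivAt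
    exact this.const_sub M
  · exact Eventually.of_forall fun y => (hasDerivAt_id y).const_sub M
  · exact Eventually.of_forall fun y => by norm_num
  · have := (Psip_tendsto hVm hV hs).const_sub M
    simpa using this
  · have := h1.const_sub M
    simpa using this
  · simpa using hL

lemma logderiv_tendsto (hVm : Measurable V) (hV : Integrable V P) {m M : ℝ} (hs : SuppIoo P V m M)
    (hC1 : ContDiffOn ℝ 1 (Pip P V) (Set.Ioo m M))
    (L : ℝ) (hL : Tendsto (deriv (Psip P V)) (nhdsWithin M (Set.Iio M)) (nhds L))
    (n : ℕ) (k : ℝ) (hk : 0 < k)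
    (hlim : Tendsto (fun x : ℝ => (Psip P V x - x) / (M - x) ^ (n + 1))
      (nhdsWithin M (Set.Iio M)) (nhds (1 / k))) :
    Tendsto (fun y => deriv (Pip P V) y / Pip P V y * (M - y) ^ (n + 1)) (nhdsWithin M (Iio M))
      (nhds (-(L * k))) := by
  have h := (hL.div hlim (by positivity)).neg
  have e : L / (1 / k) = L * k := by field_simp
  rw [e] at h
  refine h.congr' ?_
  have hpos := hlim.eventually (lt_mem_nhds (show 0 < 1 / k by positivity))
  filter_upwards [Ioo_ev hs.1, hpos] with y hy hp
  have hM : 0 < (M - y) ^ (n + 1) := pow_pos (by linarith [hy.2]) _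
  have h2 : 0 < Psip P V y - y := by
    by_contra hcon
    exact absurd hp (not_lt.2 (div_nonpos_of_nonpos_of_nonneg (by linarith) hM.le))
  simp only [Pi.div_apply]
  rw [(Psip_hasDeriv hVm hV hs hy.2 (Pip_hasDeriv hC1 hy)).deriv]
  have := Pip_pos hs hy.2
  field_simp

/-- Comparison of increments of `log Π⁺` with those of a primitive of `(M-y)^{-(n+1)}`. -/
lemma log_compare {m M : ℝ} (hs : SuppIoo P V m M)
    (hC1 : ContDiffOn ℝ 1 (Pip P V) (Set.Ioo m M)) (n : ℕ) (c : ℝ)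
    (hlog : Tendsto (fun y => deriv (Pip P V) y / Pip P V y * (M - y) ^ (n + 1))
      (nhdsWithin M (Iio M)) (nhds (-c)))
    (J : ℝ → ℝ) (hJ : ∀ r, 0 < r → HasDerivAt J (-(1 / r ^ (n + 1))) r)
    (ε : ℝ) (hε : 0 < ε) :
    ∃ δ < M, ∀ a b, δ < a → a < M → δ < b → b < M →
      |Real.log (Pip P V b) - Real.log (Pip P V a) + c * (J (M - b) - J (M - a))| ≤
        ε * |J (M - b) - J (M - a)| := by
  have hev := (hlog.eventually (Metric.ball_mem_nhds _ hε)).and (Ioo_ev hs.1)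
  obtain ⟨δ, hδM, hδ⟩ := (mem_nhdsLT_iff_exists_Ioo_subset).1 hev
  refine ⟨δ, hδM, ?_⟩
  -- derivatives
  have hderJ : ∀ y, y < M → HasDerivAt (fun y => J (M - y)) (1 / (M - y) ^ (n + 1)) y := by
    intro y hy
    have h1 := hJ (M - y) (by linarith)
    have h2 : HasDerivAt (fun y => M - y) (-1) y := (hasDerivAt_id y).const_sub M
    have := h1.comp y h2
    refine this.congr_deriv (by ring)
  have hderP : ∀ y ∈ Ioo δ M, HasDerivAt (fun y => Real.log (Pip P V y))
      (deriv (Pip P V) y / Pip P V y) y := fun y hy =>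
    (Pip_hasDeriv hC1 (hδ hy).2).log (Pip_pos hs hy.2).ne'
  have hbd : ∀ y ∈ Ioo δ M, |deriv (Pip P V) y / Pip P V y + c * (1 / (M - y) ^ (n + 1))| ≤
      ε * (1 / (M - y) ^ (n + 1)) := by
    intro y hy
    have h1 := (hδ hy).1
    have hM : 0 < (M - y) ^ (n + 1) := pow_pos (by linarith [hy.2]) _
    have h2 : |deriv (Pip P V) y / Pip P V y * (M - y) ^ (n + 1) - -c| < ε := h1
    have h3 : deriv (Pip P V) y / Pip P V y + c * (1 / (M - y) ^ (n + 1)) =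
      (deriv (Pip P V) y / Pip P V y * (M - y) ^ (n + 1) - -c) * (1 / (M - y) ^ (n + 1)) := by
      field_simp; ring
    rw [h3, abs_mul, abs_of_pos (show 0 < 1 / (M - y) ^ (n + 1) by positivity)]
    gcongr
  set F : ℝ → ℝ := fun y => Real.log (Pip P V y) + c * J (M - y) with hF
  have hderF : ∀ y ∈ Ioo δ M, HasDerivAt F
      (deriv (Pip P V) y / Pip P V y + c * (1 / (M - y) ^ (n + 1))) y := fun y hy =>
    (hderP y hy).add ((hderJ y hy.2).const_mul c)
  have mono1 : MonotoneOn (fun y => ε * J (M - y) - F y) (Ioo δ M) := by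
    refine monotoneOn_of_hasDerivWithinAt_nonneg (convex_Ioo _ _) (fun y hy =>
      (((hderJ y hy.2).const_mul ε).sub (hderF y hy)).continuousAt.continuousWithinAt)
      (fun y hy => (((hderJ y (interior_subset hy).2).const_mul ε).sub
        (hderF y (interior_subset hy))).hasDerivWithinAt) ?_
    intro y hy
    have := (abs_le.1 (hbd y (interior_subset hy))).2
    linarith
  have mono2 : MonotoneOn (fun y => ε * J (M - y) + F y) (Ioo δ M) := by
    refine monotoneOn_of_hasDerivWithinAt_nonneg (convex_Ioo _ _) (fun y hy =>
      (((hderJ y hy.2).const_mul ε).add (hderF y hy)).continuousAt.continuousWithinAt)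
      (fun y hy => (((hderJ y (interior_subset hy).2).const_mul ε).add
        (hderF y (interior_subset hy))).hasDerivWithinAt) ?_
    intro y hy
    have := (abs_le.1 (hbd y (interior_subset hy))).1
    linarith
  intro a b ha ha' hb hb'
  have e1 : Real.log (Pip P V b) - Real.log (Pip P V a) + c * (J (M - b) - J (M - a)) =
    F b - F a := by simp only [hF]; ring
  rw [e1]
  rcases le_total a b with h | h
  · have m1 := mono1 ⟨ha, ha'⟩ ⟨hb, hb'⟩ h
    have m2 := mono2 ⟨ha, ha'⟩ ⟨hb, hb'⟩ h
    simp only at m1 m2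
    have := le_abs_self (J (M - b) - J (M - a))
    rw [abs_le]; constructor <;> nlinarith
  · have m1 := mono1 ⟨hb, hb'⟩ ⟨ha, ha'⟩ h
    have m2 := mono2 ⟨hb, hb'⟩ ⟨ha, ha'⟩ h
    simp only at m1 m2
    have := neg_le_abs (J (M - b) - J (M - a))
    rw [abs_le]; constructor <;> nlinarith

end PsiFacts

lemma gqbar_fubini {σ : ℝ} (hσ : 0 < σ) {f : ℝ → ℝ} (hf : Measurable f) {C : ℝ}
    (hC : ∀ y, |f y| ≤ C) {x : ℝ} (hx : 0 < x) :
    Integrable (fun z => gqbar σ x z * f z) ∧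
    ∫ z, gqbar σ x z * f z = (1 / x) * ∫ y in (0:ℝ)..x, gconv σ f y := by
  have hC0 : 0 ≤ C := (abs_nonneg _).trans (hC 0)
  have hmeas : Measurable (fun p : ℝ × ℝ => f p.2 * gq σ (p.1 - p.2)) :=
    (hf.comp measurable_snd).mul ((gq_cont σ).measurable.comp (measurable_fst.sub measurable_snd))
  have hsl : ∀ y, Integrable (fun z => f z * gq σ (y - z)) := by
    intro y
    have := (gconv_integrable hσ hf hC y).comp_sub_left y
    simpa using this
  have hintg : Integrable (fun p : ℝ × ℝ => f p.2 * gq σ (p.1 - p.2))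
      ((volume.restrict (Ioc 0 x)).prod volume) := by
    rw [integrable_prod_iff hmeas.aestronglyMeasurable]
    refine ⟨Eventually.of_forall fun y => hsl y, ?_⟩
    refine Integrable.of_bound (C := C)
      (hmeas.aestronglyMeasurable.norm.integral_prod_right') ?_
    refine Eventually.of_forall fun y => ?_
    rw [Real.norm_eq_abs, abs_of_nonneg (integral_nonneg fun z => norm_nonneg _)]
    have h1 : (∫ z, ‖f z * gq σ (y - z)‖) = gconv σ (fun z => |f z|) y := by
      rw [← gconv_eq]
      congr 1; funext z
      rw [norm_mul, Real.norm_eq_abs, Real.norm_eq_abs, abs_of_nonneg (gq_nonneg hσ _)]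
    rw [h1]
    exact gconv_le hσ hf.abs (fun _ => abs_nonneg _) hC y
  have heq : ∀ z, gqbar σ x z * f z = (1 / x) * ∫ y in Ioc 0 x, f z * gq σ (y - z) := by
    intro z
    unfold gqbar
    rw [if_neg hx.ne', intervalIntegral.integral_of_le hx.le, integral_const_mul]
    ring
  constructor
  · simp_rw [heq]
    exact hintg.integral_prod_right.const_mul _
  · simp_rw [heq]
    rw [integral_const_mul, intervalIntegral.integral_of_le hx.le]
    congr 1
    rw [← integral_integral_swap (f := fun y z => f z * gq σ (y - z)) hintg]
    congr 1; funext y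
    exact gconv_eq σ f y

lemma K_rep {σ : ℝ} (hσ : 0 < σ) (N : ℝ) {f : ℝ → ℝ} (hf : Measurable f) {C : ℝ}
    (hC : ∀ y, |f y| ≤ C) {x : ℝ} (hx : 0 < x) :
    Integrable (fun z => ((1 / N) * gq σ (x - z) + ((N - 1) / N) * gqbar σ x z) * f z) ∧
    ∫ z, ((1 / N) * gq σ (x - z) + ((N - 1) / N) * gqbar σ x z) * f z =
      (1 / N) * gconv σ f x + ((N - 1) / N) * ((1 / x) * ∫ y in (0:ℝ)..x, gconv σ f y) := by
  obtain ⟨h1, h2⟩ := gqbar_fubini hσ hf hC hx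
  have hsl : Integrable (fun z => f z * gq σ (x - z)) := by
    have := (gconv_integrable hσ hf hC x).comp_sub_left x
    simpa using this
  have heq : (fun z => ((1 / N) * gq σ (x - z) + ((N - 1) / N) * gqbar σ x z) * f z) =
      fun z => (1 / N) * (f z * gq σ (x - z)) + ((N - 1) / N) * (gqbar σ x z * f z) := by
    funext z; ring
  rw [heq]
  refine ⟨(hsl.const_mul _).add (h1.const_mul _), ?_⟩
  rw [integral_add (hsl.const_mul _) (h1.const_mul _), integral_const_mul, integral_const_mul, h2,
    gconv_eq]

section Rep

variable {Ω : Type*} [MeasurableSpace Ω] {P : Measure Ω} [IsProbabilityMeasure P] {V : Ω → ℝ}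

lemma representation (hVm : Measurable V) (hV : Integrable V P) {m M : ℝ} (hs : SuppIoo P V m M)
    {σ : ℝ} (hσ : 0 < σ) (N : ℕ) (hN : 2 ≤ N)
    (R : ℝ → ℝ) (hRm : Monotone R) (hRlt : ∀ x, R x < M)
    (hRsol : SolvesCp P V σ N R) :
    ∃ (e : ℝ → ℝ) (C : ℝ), Continuous e ∧ Antitone e ∧ (∀ x, 0 ≤ e x) ∧
      (∀ x, 0 < x → M - R x = e x / N + (1 - 1 / (N:ℝ)) * ((1 / x) * ∫ y in (0:ℝ)..x, e y)) ∧
      (∀ x, 1 ≤ x → e x ≤ (M - Psip P V (R (x - √x))) + C * Real.exp (-(√x / 2))) ∧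
      (∀ x, 1 ≤ x → (M - Psip P V (R (x + √x))) - C * Real.exp (-(√x / 2)) ≤ e x) := by
  set E := ∫ ω, V ω ∂P with hE
  set D := M - E with hD
  set t : ℝ → ℝ := fun x => M - Psip P V (R x) with ht
  have tanti : Antitone t := fun a b hab => by
    have := Psip_mono hVm hV hs (hRm hab) (hRlt b)
    simp only [ht]; linarith
  have t0 : ∀ x, 0 ≤ t x := fun x => by
    have := (Psip_bounds hVm hV hs (hRlt x)).2
    simp only [ht]; linarith
  have tD : ∀ x, t x ≤ D := fun x => by
    have := Psip_ge_mean hVm hV hs (hRlt x)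
    simp only [ht, hD]; linarith
  have tabs : ∀ x, |t x| ≤ D := fun x => by rw [abs_of_nonneg (t0 x)]; exact tD x
  set G : ℝ → ℝ := fun z => if 0 < z then gconv σ t z else D with hG
  have gt0 : ∀ x, 0 ≤ gconv σ t x := gconv_nonneg hσ t0
  have gtD : ∀ x, gconv σ t x ≤ D := gconv_le hσ tanti.measurable t0 tD
  have hD0 : 0 ≤ D := (t0 0).trans (tD 0)
  have G0 : ∀ x, 0 ≤ G x := fun x => by
    simp only [hG]; split_ifs; exacts [gt0 x, hD0]
  have GD : ∀ x, G x ≤ D := fun x => by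
    simp only [hG]; split_ifs; exacts [gtD x, le_rfl]
  have Gabs : ∀ x, |G x| ≤ D := fun x => by rw [abs_of_nonneg (G0 x)]; exact GD x
  have gtanti := gconv_antitone hσ tanti tabs
  have Ganti : Antitone G := fun a b hab => by
    simp only [hG]
    by_cases ha : 0 < a
    · rw [if_pos ha, if_pos (ha.trans_le hab)]; exact gtanti hab
    · rw [if_neg ha]; exact GD b
  have hNp : (0:ℝ) < N := by positivity
  have gKn := gK_nonneg hσ
  refine ⟨gconv σ G, 2 * (D * gK σ), gconv_continuous hσ Ganti Gabs, gconv_antitone hσ Ganti Gabs,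
    gconv_nonneg hσ G0, ?_, ?_, ?_⟩
  · intro x hx
    obtain ⟨i1, r1⟩ := K_rep hσ N Ganti.measurable Gabs hx
    obtain ⟨i2, r2⟩ := K_rep hσ N (f := fun _ => (1:ℝ)) measurable_const (C := 1)
      (fun _ => by simp) hx
    have hone : ∫ z, ((1 / (N:ℝ)) * gq σ (x - z) + (((N:ℝ) - 1) / N) * gqbar σ x z) = 1 := by
      simp only [mul_one, gconv_const hσ] at r2
      rw [r2]
      simp only [intervalIntegral.integral_const, smul_eq_mul]
      field_simp; ring
    simp only [mul_one] at i2
    set K : ℝ → ℝ := fun z => (1 / (N:ℝ)) * gq σ (x - z) + (((N:ℝ) - 1) / N) * gqbar σ x z with hK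
    have hR := hRsol x
    have hg1 : ∀ z, ∫ y, Psip P V (R y) * gq σ (z - y) = M - gconv σ t z := by
      intro z
      rw [gconv_eq σ (fun y => Psip P V (R y)) z]
      have := gconv_sub hσ (f := fun _ => M) (g := t) measurable_const tanti.measurable
        (C := |M|) (fun _ => le_rfl) tabs z
      rw [gconv_const hσ] at this
      rw [← this]
      congr 1; funext y; simp [ht]
    simp only [hg1] at hR
    have hKint : Integrable K := i2
    have e1 : ∫ z in Ioi (0:ℝ), K z * (M - gconv σ t z) =
        ∫ z in Ioi (0:ℝ), (M * K z - K z * G z) := by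
      refine setIntegral_congr_fun measurableSet_Ioi fun z hz => ?_
      have : G z = gconv σ t z := by simp only [hG]; rw [if_pos (mem_Ioi.1 hz)]
      simp only [this]; ring
    have e2 : E * ∫ z in Iio (0:ℝ), K z = ∫ z in Iic (0:ℝ), (M * K z - K z * G z) := by
      rw [integral_Iic_eq_integral_Iio, ← integral_const_mul]
      refine setIntegral_congr_fun measurableSet_Iio fun z hz => ?_
      have : G z = D := by simp only [hG]; rw [if_neg (not_lt.2 (le_of_lt (mem_Iio.1 hz)))]
      simp only [this, hD]; ring
    have e3 : R x = ∫ z, (M * K z - K z * G z) := by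
      rw [hR]
      change (∫ z in Ioi (0:ℝ), K z * (M - gconv σ t z)) + E * (∫ z in Iio (0:ℝ), K z) = _
      rw [e1, e2, add_comm]
      have hii : Integrable (fun z => M * K z - K z * G z) := (hKint.const_mul M).sub i1
      exact intervalIntegral.integral_Iic_add_Ioi hii.integrableOn hii.integrableOn
    rw [e3, integral_sub (hKint.const_mul M) i1, integral_const_mul, hone, r1]
    field_simp
    ring
  · intro x hx
    have hs1 := Real.sqrt_nonneg x
    have hs2 : √x ≤ x := by
      rw [Real.sqrt_le_left (by linarith)]; nlinarith
    have key := gconv_upper hσ Ganti.measurable G0 GD x (√x / 2)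
      (t (x - √x) + D * gK σ * Real.exp (-(√x / 2)))
      (add_nonneg (t0 _) (by positivity)) (fun z hz => ?_)
    · simp only [ht] at key ⊢; linarith
    · have hz0 : 0 < z := by linarith
      simp only [hG]; rw [if_pos hz0]
      exact gconv_upper hσ tanti.measurable t0 tD z (√x / 2) _ (t0 _)
        (fun y hy => tanti (by linarith))
  · intro x hx
    have hs1 := Real.sqrt_nonneg x
    have hexp : 0 ≤ D * gK σ * Real.exp (-(√x / 2)) := by positivity
    have key := gconv_lower hσ Ganti.measurable G0 GD x (√x / 2)
      (t (x + √x) - D * gK σ * Real.exp (-(√x / 2)))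
      (by linarith [tD (x + √x)]) (fun z hz => ?_)
    · simp only [ht] at key ⊢; linarith
    · simp only [hG]
      split_ifs with hz0
      · exact gconv_lower hσ tanti.measurable t0 tD z (√x / 2) _ (tD _)
          (fun y hy => tanti (by linarith))
      · linarith [tD (x + √x)]

end Rep

lemma B_facts (e : ℝ → ℝ) (he : Continuous e) (hea : Antitone e) (he0 : ∀ x, 0 ≤ e x)
    (B : ℝ → ℝ) (hB : ∀ x, B x = (1 / x) * ∫ y in (0:ℝ)..x, e y) :
    (∀ x, 0 < x → e x ≤ B x) ∧
    (∀ x, 0 < x → HasDerivAt B ((e x - B x) / x) x) ∧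
    (∀ x y, 0 < x → x ≤ y → B y ≤ B x) ∧
    (∀ x y, 0 < x → x ≤ y → x * B x ≤ y * B y) := by
  have h1 : ∀ x, 0 < x → e x ≤ B x := by
    intro x hx
    have : ∫ _y in (0:ℝ)..x, e x ≤ ∫ y in (0:ℝ)..x, e y :=
      intervalIntegral.integral_mono_on hx.le (by simp) (he.intervalIntegrable _ _)
        (fun y hy => hea hy.2)
    rw [intervalIntegral.integral_const, smul_eq_mul, sub_zero] at this
    rw [hB x, one_div, ← div_eq_inv_mul, le_div_iff₀ hx]
    linarith
  have h2 : ∀ x, 0 < x → HasDerivAt B ((e x - B x) / x) x := by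
    intro x hx
    have hA : HasDerivAt (fun x => ∫ y in (0:ℝ)..x, e y) (e x) x :=
      intervalIntegral.integral_hasDerivAt_right (he.intervalIntegrable _ _)
        he.stronglyMeasurable.stronglyMeasurableAtFilter he.continuousAt
    have hd := hA.div (hasDerivAt_id x) hx.ne'
    have hBe : B = fun x => (∫ y in (0:ℝ)..x, e y) / x := by
      funext x; rw [hB x]; ring
    have hval : ∫ y in (0:ℝ)..x, e y = x * B x := by rw [hB x]; field_simp
    rw [hBe]
    refine HasDerivAt.congr_deriv hd ?_
    simp only [id, hval]
    field_simp
  refine ⟨h1, h2, ?_, ?_⟩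
  · have : AntitoneOn B (Ioi 0) := by
      refine antitoneOn_of_hasDerivWithinAt_nonpos (convex_Ioi _)
        (fun y hy => (h2 y hy).continuousAt.continuousWithinAt)
        (fun y hy => (h2 y (interior_subset hy)).hasDerivWithinAt) ?_
      intro y hy
      have hy0 : 0 < y := interior_subset hy
      exact div_nonpos_of_nonpos_of_nonneg (by linarith [h1 y hy0]) hy0.le
    intro x y hx hxy
    exact this (mem_Ioi.2 hx) (mem_Ioi.2 (hx.trans_le hxy)) hxy
  · intro x y hx hxy
    have hy := hx.trans_le hxy
    have hval : ∀ x, 0 < x → x * B x = ∫ y in (0:ℝ)..x, e y := by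
      intro x hx; rw [hB x]; field_simp
    rw [hval x hx, hval y hy, ← intervalIntegral.integral_add_adjacent_intervals
      (he.intervalIntegrable 0 x) (he.intervalIntegrable x y)]
    have := intervalIntegral.integral_nonneg (μ := volume) hxy (fun u _ => he0 u)
    linarith

lemma nu_small (B : ℝ → ℝ) (C : ℝ) (p : ℕ) (hBpos : ∀ x, 0 < x → 0 < B x)
    (hBmono : ∀ x y, 0 < x → x ≤ y → x * B x ≤ y * B y) :
    Tendsto (fun x => C * Real.exp (-(√x / 2)) / B x ^ (p + 1)) atTop (nhds 0) := by
  have hb := hBpos 1 one_pos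
  have hs : Tendsto (fun x : ℝ => √x / 2) atTop atTop :=
    Real.tendsto_sqrt_atTop.atTop_div_const (by norm_num)
  have h1 := ((Real.tendsto_pow_mul_exp_neg_atTop_nhds_zero (2 * (p + 1))).comp hs).const_mul
    (|C| * (4 ^ (p + 1)) / B 1 ^ (p + 1))
  rw [mul_zero] at h1
  refine squeeze_zero_norm' ?_ h1
  filter_upwards [eventually_ge_atTop 1] with x hx
  have hx0 : 0 < x := by linarith
  have hBx := hBpos x hx0
  have h2 := hBmono 1 x one_pos hx
  rw [one_mul] at h2
  simp only [Function.comp]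
  rw [norm_div, norm_mul, Real.norm_eq_abs, Real.norm_eq_abs, Real.norm_eq_abs, Real.abs_exp,
    abs_of_pos (pow_pos hBx _), pow_mul, div_pow, Real.sq_sqrt hx0.le]
  have h3 : (4:ℝ) ^ (p + 1) * (x / 2 ^ 2) ^ (p + 1) = x ^ (p + 1) := by
    rw [← mul_pow]; congr 1; ring
  have h4 : B 1 ^ (p + 1) ≤ x ^ (p + 1) * B x ^ (p + 1) := by
    rw [← mul_pow]; exact pow_le_pow_left₀ hb.le h2 _
  have h5 : |C| * 4 ^ (p + 1) / B 1 ^ (p + 1) * ((x / 2 ^ 2) ^ (p + 1) * Real.exp (-(√x / 2))) =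
      |C| * Real.exp (-(√x / 2)) * (x ^ (p + 1) / B 1 ^ (p + 1)) := by
    rw [← h3]; ring
  rw [h5, div_eq_mul_inv]
  refine mul_le_mul_of_nonneg_left ?_ (by positivity)
  rw [inv_eq_one_div, div_le_div_iff₀ (pow_pos hBx _) (pow_pos hb _)]
  linarith

lemma limit_diff (f w : ℝ → ℝ) (c : ℝ) (hf : ∀ x, 0 < x → HasDerivAt f (w x / x) x)
    (hw : Tendsto w atTop (nhds c)) (x : ℝ) (hx : 0 < x) :
    Tendsto (fun α => f (α * x) - f α) atTop (nhds (c * Real.log x)) := by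
  rw [Metric.tendsto_atTop]
  intro ε hε
  set b := min 1 x with hb
  have hb0 : 0 < b := lt_min one_pos hx
  set δ := ε * b / (|x - 1| + 1) with hδ
  have hδ0 : 0 < δ := by positivity
  obtain ⟨X, hX⟩ := eventually_atTop.1 (hw.eventually (Metric.ball_mem_nhds c hδ0))
  refine ⟨max 1 (max 1 X / b), fun α hα => ?_⟩
  have hα1 : 1 ≤ α := (le_max_left _ _).trans hα
  have hαX : max 1 X ≤ α * b := by
    have := (le_max_right _ _).trans hα
    rwa [div_le_iff₀ hb0] at this
  have hα0 : 0 < α := by linarith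
  have hder : ∀ y ∈ Ici (α * b), HasDerivWithinAt (fun y => f y - c * Real.log y)
      (w y / y - c * y⁻¹) (Ici (α * b)) y := by
    intro y hy
    have hy0 : 0 < y := (by positivity : 0 < α * b).trans_le hy
    exact ((hf y hy0).sub ((Real.hasDerivAt_log hy0.ne').const_mul c)).hasDerivWithinAt
  have hbd : ∀ y ∈ Ici (α * b), ‖w y / y - c * y⁻¹‖ ≤ δ / (α * b) := by
    intro y hy
    have hab : 0 < α * b := by positivity
    have hy0 : 0 < y := hab.trans_le hy
    have h1 : dist (w y) c < δ := hX y ((le_max_right _ _).trans (hαX.trans hy))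
    rw [Real.dist_eq] at h1
    have : w y / y - c * y⁻¹ = (w y - c) / y := by field_simp
    rw [this, norm_div, Real.norm_eq_abs, Real.norm_eq_abs, abs_of_pos hy0]
    exact div_le_div₀ hδ0.le h1.le hab hy
  have h2 := (convex_Ici (α * b)).norm_image_sub_le_of_norm_hasDerivWithin_le hder hbd
    (x := α) (y := α * x)
    (mem_Ici.2 (by have := min_le_left 1 x; nlinarith)) (mem_Ici.2 (by gcongr; exact min_le_right _ _))
  rw [Real.log_mul hα0.ne' hx.ne'] at h2
  have h3 : f (α * x) - c * (Real.log α + Real.log x) - (f α - c * Real.log α) =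
    f (α * x) - f α - c * Real.log x := by ring
  rw [h3] at h2
  rw [Real.dist_eq]
  refine lt_of_le_of_lt h2 ?_
  have h4 : ‖α * x - α‖ = α * |x - 1| := by
    rw [show α * x - α = α * (x - 1) by ring, norm_mul, Real.norm_eq_abs, Real.norm_eq_abs,
      abs_of_pos hα0]
  rw [h4, hδ]
  have : ε * b / (|x - 1| + 1) / (α * b) * (α * |x - 1|) = ε * (|x - 1| / (|x - 1| + 1)) := by
    field_simp
  rw [this]
  have : |x - 1| / (|x - 1| + 1) < 1 := by rw [div_lt_one (by positivity)]; linarith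
  nlinarith

lemma slow_growth (B w : ℝ → ℝ) (n : ℕ) (hBpos : ∀ x, 0 < x → 0 < B x)
    (hB' : ∀ x, 0 < x → HasDerivAt B (-(w x * B x) / x) x)
    (hw : Tendsto w atTop (nhds 0)) : Tendsto (fun x => B x ^ n * √x) atTop atTop := by
  have hev : ∀ᶠ x in atTop, n * w x ≤ 1 / 4 := by
    have := hw.const_mul (n : ℝ)
    rw [mul_zero] at this
    exact (this.eventually (gt_mem_nhds (show (0:ℝ) < 1 / 4 by norm_num))).mono fun x h => h.le
  obtain ⟨X0, hX0⟩ := eventually_atTop.1 hev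
  set X := max 1 X0 with hX
  have hX1 : 1 ≤ X := le_max_left _ _
  have hder : ∀ y, 0 < y → HasDerivAt (fun y => n * Real.log (B y) + 1 / 4 * Real.log y)
      (n * (-(w y * B y) / y / B y) + 1 / 4 * y⁻¹) y := fun y hy =>
    (((hB' y hy).log (hBpos y hy).ne').const_mul _).add
      ((Real.hasDerivAt_log hy.ne').const_mul _)
  have hmono : MonotoneOn (fun y => n * Real.log (B y) + 1 / 4 * Real.log y) (Ici X) := by
    refine monotoneOn_of_hasDerivWithinAt_nonneg (convex_Ici _)
      (fun y hy => (hder y (by have := mem_Ici.1 hy; linarith)).continuousAt.continuousWithinAt)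
      (fun y hy => (hder y (by have := mem_Ici.1 (interior_subset hy); linarith)).hasDerivWithinAt) ?_
    intro y hy
    have hyX := mem_Ici.1 (interior_subset hy)
    have hy0 : 0 < y := by linarith
    have hb := hBpos y hy0
    have h1 := hX0 y ((le_max_right _ _).trans hyX)
    have : n * (-(w y * B y) / y / B y) + 1 / 4 * y⁻¹ = (1 / 4 - n * w y) / y := by
      field_simp; ring
    rw [this]
    exact div_nonneg (by linarith) hy0.le
  set c := n * Real.log (B X) + 1 / 4 * Real.log X with hc
  have ht : Tendsto (fun x : ℝ => Real.exp (c + 1 / 4 * Real.log x)) atTop atTop :=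
    Real.tendsto_exp_atTop.comp (tendsto_atTop_add_const_left _ _
      (Real.tendsto_log_atTop.const_mul_atTop (by norm_num)))
  refine tendsto_atTop_mono' _ ?_ ht
  filter_upwards [eventually_ge_atTop X] with x hx
  have hx0 : 0 < x := by linarith
  have hb := hBpos x hx0
  have h1 := hmono (mem_Ici.2 le_rfl) (mem_Ici.2 hx) hx
  simp only at h1
  have h2 : 0 < B x ^ n * √x := mul_pos (pow_pos hb _) (Real.sqrt_pos.2 hx0)
  rw [← Real.le_log_iff_exp_le h2, Real.log_mul (pow_pos hb _).ne' (Real.sqrt_pos.2 hx0).ne',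
    Real.log_pow, Real.log_sqrt hx0.le]
  linarith

lemma ratio_of_J {Ω : Type*} [MeasurableSpace Ω] {P : Measure Ω} [IsProbabilityMeasure P]
    {V : Ω → ℝ} {m M : ℝ} (hs : SuppIoo P V m M)
    (hC1 : ContDiffOn ℝ 1 (Pip P V) (Set.Ioo m M)) (n : ℕ) (a c : ℝ)
    (hlog : Tendsto (fun y => deriv (Pip P V) y / Pip P V y * (M - y) ^ (n + 1))
      (nhdsWithin M (Iio M)) (nhds (-a)))
    (J : ℝ → ℝ) (hJ : ∀ r, 0 < r → HasDerivAt J (-(1 / r ^ (n + 1))) r)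
    (R : ℝ → ℝ) (hRlt : ∀ x, R x < M) (hRtop : Tendsto R atTop (nhds M))
    (x : ℝ) (hx : 0 < x)
    (hlim : Tendsto (fun α => J (M - R (α * x)) - J (M - R α)) atTop (nhds (c * Real.log x))) :
    Tendsto (fun α : ℝ => Pip P V (R (α * x)) / Pip P V (R α)) atTop
        (nhds (x ^ (-(a * c)))) := by
  set D : ℝ → ℝ := fun α => J (M - R (α * x)) - J (M - R α) with hD
  have hRx : Tendsto (fun α => R (α * x)) atTop (nhds M) :=
    hRtop.comp (tendsto_id.atTop_mul_const hx)
  have h0 : Tendsto (fun α => Real.log (Pip P V (R (α * x))) - Real.log (Pip P V (R α)) + a * D α)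
      atTop (nhds 0) := by
    rw [Metric.tendsto_nhds]
    intro ε hε
    set l := |c * Real.log x| with hl
    have hl0 : 0 ≤ l := abs_nonneg _
    obtain ⟨δ, hδM, hδ⟩ := log_compare hs hC1 n a hlog J hJ (ε / (l + 2)) (by positivity)
    have hDb : ∀ᶠ α in atTop, |D α| < l + 1 :=
      hlim.abs.eventually (gt_mem_nhds (show l < l + 1 by linarith))
    filter_upwards [hDb, hRtop.eventually (lt_mem_nhds hδM), hRx.eventually (lt_mem_nhds hδM)]
      with α h1 h2 h3
    have h4 := hδ (R α) (R (α * x)) h2 (hRlt _) h3 (hRlt _)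
    rw [dist_zero_right, Real.norm_eq_abs]
    refine h4.trans_lt ?_
    calc ε / (l + 2) * |D α| ≤ ε / (l + 2) * (l + 1) := by gcongr
      _ < ε := by rw [div_mul_eq_mul_div, div_lt_iff₀ (by positivity)]; nlinarith
  have h1 : Tendsto (fun α => Real.log (Pip P V (R (α * x))) - Real.log (Pip P V (R α)))
      atTop (nhds (0 - a * (c * Real.log x))) := by
    refine (h0.sub (hlim.const_mul a)).congr fun α => ?_
    ring
  have h2 := (Real.continuous_exp.tendsto _).comp h1
  have h3 : Real.exp (0 - a * (c * Real.log x)) = x ^ (-(a * c)) := by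
    rw [Real.rpow_def_of_pos hx]; congr 1; ring
  rw [h3] at h2
  refine h2.congr fun α => ?_
  simp only [Function.comp]
  rw [Real.exp_sub, Real.exp_log (Pip_pos hs (hRlt _)), Real.exp_log (Pip_pos hs (hRlt _))]

/-- If `N ≥ 2`, `Π⁺` is `C¹` on `(m,M)`, `Ψ⁺ₓ(M) = lim_{x→M⁻} (Ψ⁺)'(x)` exists,
and `(Ψ⁺(x) − x)/(M − x)^{n+1} → 1/k` as `x → M⁻` for some integer `n ≥ 0` and `k ∈ (0,∞)`, then
for any nondecreasing solution `R` of (C⁺) with `R < M` and `R → M` at `∞`, the function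
`Π⁺ ∘ R` is regularly varying at `∞` of index `−Ψ⁺ₓ(M)/(1 − Ψ⁺ₓ(M)/N)`. -/
theorem stmt17 {Ω : Type*} [MeasurableSpace Ω] (P : Measure Ω) [IsProbabilityMeasure P]
    (V : Ω → ℝ) (hVmeas : Measurable V) (hV : Integrable V P)
    (m M : ℝ) (hsupp : SuppIoo P V m M)
    (σ : ℝ) (hσ : 0 < σ) (N : ℕ) (hN : 2 ≤ N)
    (hC1 : ContDiffOn ℝ 1 (Pip P V) (Set.Ioo m M))
    (L : ℝ) (hL : Tendsto (deriv (Psip P V)) (nhdsWithin M (Set.Iio M)) (nhds L))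
    (n : ℕ) (k : ℝ) (hk : 0 < k)
    (hlim : Tendsto (fun x : ℝ => (Psip P V x - x) / (M - x) ^ (n + 1))
      (nhdsWithin M (Set.Iio M)) (nhds (1 / k)))
    (R : ℝ → ℝ) (hRm : Monotone R) (hRr : ∀ x, R x ∈ Set.Icc m M)
    (hRlt : ∀ x, R x < M) (hRtop : Tendsto R atTop (nhds M))
    (hRsol : SolvesCp P V σ N R) :
    ∀ x : ℝ, 0 < x →
      Tendsto (fun α : ℝ => Pip P V (R (α * x)) / Pip P V (R α)) atTop
        (nhds (x ^ (-(L / (1 - L / (N:ℝ)))))) := by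
  have hNr : (2:ℝ) ≤ N := by exact_mod_cast hN
  have hNp : (0:ℝ) < N := by linarith
  have hNi : 1 / (N:ℝ) ≤ 1 / 2 := by gcongr
  have hNi0 : 0 < 1 / (N:ℝ) := by positivity
  obtain ⟨e, C, hec, hea, he0, hrep, hup, hlo⟩ :=
    representation hVmeas hV hsupp hσ N hN R hRm hRlt hRsol
  set B : ℝ → ℝ := fun x => (1 / x) * ∫ y in (0:ℝ)..x, e y with hBdef
  obtain ⟨heB, hB', hBanti, hBmono⟩ := B_facts e hec hea he0 B (fun _ => rfl)
  set ρ : ℝ → ℝ := fun x => M - R x with hρdef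
  set η : ℝ → ℝ := fun x => Psip P V (R x) - R x with hηdef
  have hρpos : ∀ x, 0 < ρ x := fun x => by have := hRlt x; simp only [hρdef]; linarith
  have hρ : ∀ x, 0 < x → ρ x = e x / N + (1 - 1 / (N:ℝ)) * B x := hrep
  have hρB : ∀ x, 0 < x → ρ x = B x - (B x - e x) / N := fun x hx => by rw [hρ x hx]; ring
  have hρle : ∀ x, 0 < x → ρ x ≤ B x := fun x hx => by
    rw [hρB x hx]
    have : 0 ≤ (B x - e x) / N := div_nonneg (by linarith [heB x hx]) hNp.le
    linarith
  have hBpos : ∀ x, 0 < x → 0 < B x := fun x hx => (hρpos x).trans_le (hρle x hx)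
  have hρge : ∀ x, 0 < x → (1 - 1 / (N:ℝ)) * B x ≤ ρ x := fun x hx => by
    rw [hρ x hx]
    have : 0 ≤ e x / N := div_nonneg (he0 x) hNp.le
    linarith
  -- limits along R
  have hRt : Tendsto R atTop (nhdsWithin M (Iio M)) :=
    tendsto_nhdsWithin_iff.2 ⟨hRtop, Eventually.of_forall fun x => hRlt x⟩
  have hslope := slope_tendsto hVmeas hV hsupp hC1 L hL
  have hηρ : Tendsto (fun x => η x / ρ x) atTop (nhds (1 - L)) := by
    refine ((hslope.comp hRt).const_sub 1).congr fun x => ?_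
    have := (hρpos x).ne'
    simp only [Function.comp, hηdef]
    change 1 - (M - Psip P V (R x)) / ρ x = _
    field_simp
    simp only [hρdef]; ring
  have hηn : Tendsto (fun x => η x / ρ x ^ (n + 1)) atTop (nhds (1 / k)) := hlim.comp hRt
  have hL0 : 0 ≤ L := by
    refine ge_of_tendsto (hslope.comp hRt) (Eventually.of_forall fun x => ?_)
    have := (Psip_bounds hVmeas hV hsupp (hRlt x)).2
    exact div_nonneg (by linarith) (hρpos x).le
  have hL1 : L ≤ 1 := by
    refine le_of_tendsto (hslope.comp hRt) (Eventually.of_forall fun x => ?_)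
    have := (Psip_bounds hVmeas hV hsupp (hRlt x)).1
    exact (div_le_one (hρpos x)).2 (by linarith)
  have hLN : L / N ≤ 1 / 2 := (div_le_div_of_nonneg_right hL1 hNp.le).trans hNi
  have hLN0 : 0 ≤ L / N := div_nonneg hL0 hNp.le
  have hupe : ∀ᶠ x in atTop, e x ≤ ρ (x - √x) - η (x - √x) + C * Real.exp (-(√x / 2)) := by
    filter_upwards [eventually_ge_atTop 1] with x hx
    have := hup x hx
    simp only [hρdef, hηdef]; linarith
  have hloe : ∀ᶠ x in atTop, ρ (x + √x) - η (x + √x) - C * Real.exp (-(√x / 2)) ≤ e x := by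
    filter_upwards [eventually_ge_atTop 1] with x hx
    have := hlo x hx
    simp only [hρdef, hηdef]; linarith
  -- first step
  have hw0 : Tendsto (fun x => (B x - e x) / B x ^ (0 + 1)) atTop (nhds ((1 - L) / (1 - L / N))) := by
    refine core_lemma e B ρ η (fun x => C * Real.exp (-(√x / 2))) N (L / N) (1 - L) 0 hLN0 hLN
      (by linarith) hBpos hBanti hBmono (fun x _ => he0 x) heB hρ hupe hloe
      (nu_small B C 0 hBpos hBmono) ?_ ?_
    · simpa using Real.tendsto_sqrt_atTop
    · have h1 : Tendsto (fun x => η x / ρ x - (1 - L)) atTop (nhds 0) := by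
        simpa using hηρ.sub_const (1 - L)
      refine squeeze_zero_norm' (a := fun x => |η x / ρ x - (1 - L)|) ?_ (by simpa using h1.abs)
      filter_upwards [eventually_gt_atTop 0] with x hx
      have hb := hBpos x hx
      have hr := hρpos x
      have he : e x = N * ρ x - (N - 1) * B x := by rw [hρ x hx]; field_simp; ring
      have h2 : η x / B x ^ (0 + 1) - (1 - L - (1 / N - L / N) * ((B x - e x) / B x ^ (0 + 1))) =
          (η x / ρ x - (1 - L)) * (ρ x / B x) := by
        rw [he]; field_simp; ring
      rw [h2, norm_mul, Real.norm_eq_abs, Real.norm_eq_abs, abs_of_pos (div_pos hr hb)]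
      exact mul_le_of_le_one_right (abs_nonneg _) ((div_le_one hb).2 (hρle x hx))
  simp only [zero_add, pow_one] at hw0
  have hlog := logderiv_tendsto hVmeas hV hsupp hC1 L hL n k hk hlim
  have hρB0 : Tendsto (fun x => ρ x / B x) atTop (nhds (1 - (1 - L) / (1 - L / N) / N)) := by
    refine ((hw0.div_const (N:ℝ)).const_sub 1).congr' ?_
    filter_upwards [eventually_gt_atTop 0] with x hx
    have hb := hBpos x hx
    rw [hρB x hx]; field_simp
  intro x hx
  rcases Nat.eq_zero_or_pos n with hn | hn
  · subst hn
    have hkL : 1 - L = 1 / k := by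
      refine tendsto_nhds_unique hηρ ?_
      simpa using hηn
    have hLk : L * k * ((1 - L) / (1 - L / N)) = L / (1 - L / N) := by
      rw [hkL]; field_simp
    rw [← hLk]
    have hpos : 0 < 1 - (1 - L) / (1 - L / N) / N := by
      have : 1 - 1 / (N:ℝ) ≤ 1 - (1 - L) / (1 - L / N) / N := by
        refine ge_of_tendsto hρB0 ?_
        filter_upwards [eventually_gt_atTop 0] with y hy
        exact (le_div_iff₀ (hBpos y hy)).2 (hρge y hy)
      linarith
    refine ratio_of_J hsupp hC1 0 (L * k) _ hlog (fun r => - Real.log r) ?_ R hRlt hRtop x hx ?_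
    · intro r hr
      refine (Real.hasDerivAt_log hr.ne').neg.congr_deriv ?_
      simp
    · have h1 := limit_diff (fun y => - Real.log (B y)) (fun y => (B y - e y) / B y) _
        (fun y hy => ((hB' y hy).log (hBpos y hy).ne').neg.congr_deriv (by
          have := (hBpos y hy).ne'
          field_simp; ring)) hw0 x hx
      have h2 : Tendsto (fun y => Real.log (ρ y / B y)) atTop _ := hρB0.log hpos.ne'
      have h3 := h2.comp (tendsto_id.atTop_mul_const hx)
      have h4 := (h1.sub h3).add h2
      rw [sub_add_cancel] at h4
      refine h4.congr' ?_
      filter_upwards [eventually_gt_atTop 0] with α hα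
      have hax : 0 < α * x := by positivity
      simp only [Function.comp, id]
      rw [Real.log_div (hρpos _).ne' (hBpos _ hα).ne', Real.log_div (hρpos _).ne' (hBpos _ hax).ne']
      simp only [hρdef]
      ring
  · have hL1' : L = 1 := by
      have hρ0 : Tendsto ρ atTop (nhds 0) := by
        have := hRtop.const_sub M
        simpa using this
      have h1 : Tendsto (fun x => η x / ρ x ^ (n + 1) * ρ x ^ n) atTop (nhds (1 / k * 0 ^ n)) :=
        hηn.mul (hρ0.pow n)
      rw [zero_pow hn.ne', mul_zero] at h1
      have h2 : Tendsto (fun x => η x / ρ x) atTop (nhds 0) := by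
        refine h1.congr fun x => ?_
        have := (hρpos x).ne'
        field_simp
        try ring
      have := tendsto_nhds_unique hηρ h2
      linarith
    subst hL1'
    rw [sub_self, zero_div] at hw0
    rw [sub_self, zero_div, zero_div, sub_zero] at hρB0
    have hgrow : Tendsto (fun x => B x ^ n * √x) atTop atTop :=
      slow_growth B (fun x => (B x - e x) / B x) n hBpos (fun y hy => (hB' y hy).congr_deriv (by
        have := (hBpos y hy).ne'
        field_simp; ring)) hw0
    have hηB : Tendsto (fun x => η x / B x ^ (n + 1)) atTop (nhds (1 / k)) := by
      have h1 := hηn.mul (hρB0.pow (n + 1))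
      rw [one_pow, mul_one] at h1
      refine h1.congr' ?_
      filter_upwards [eventually_gt_atTop 0] with y hy
      have := (hBpos y hy).ne'
      have := (hρpos y).ne'
      rw [div_pow]; field_simp
    have hwn : Tendsto (fun x => (B x - e x) / B x ^ (n + 1)) atTop
        (nhds ((1 / k) / (1 - 1 / N))) := by
      refine core_lemma e B ρ η (fun x => C * Real.exp (-(√x / 2))) N (1 / N) (1 / k) n hLN0 hLN
        (by positivity) hBpos hBanti hBmono (fun x _ => he0 x) heB hρ hupe hloe
        (nu_small B C n hBpos hBmono) hgrow ?_
      simp only [sub_self, zero_mul, sub_zero]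
      simpa using hηB.sub_const (1 / k)
    have hLk : 1 * k * ((1 / k) / (1 - 1 / (N:ℝ))) = 1 / (1 - 1 / (N:ℝ)) := by
      field_simp
    rw [← hLk]
    have hnr : (n:ℝ) ≠ 0 := by exact_mod_cast hn.ne'
    have hJd : ∀ r : ℝ, 0 < r → HasDerivAt (fun r : ℝ => (1 / (n:ℝ)) * (r ^ n)⁻¹)
        (-(1 / r ^ (n + 1))) r := by
      intro r hr
      refine (((hasDerivAt_pow n r).inv (pow_pos hr n).ne').const_mul (1 / (n:ℝ))).congr_deriv ?_
      obtain ⟨j, rfl⟩ : ∃ j, n = j + 1 := ⟨n - 1, by omega⟩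
      have := hr.ne'
      simp only [Nat.add_sub_cancel]
      field_simp
      ring
    refine ratio_of_J hsupp hC1 n (1 * k) _ hlog (fun r => (1 / (n:ℝ)) * (r ^ n)⁻¹) hJd R hRlt
      hRtop x hx ?_
    have h1 := limit_diff (fun y => (1 / (n:ℝ)) * (B y ^ n)⁻¹) (fun y => (B y - e y) / B y ^ (n + 1)) _
        (fun y hy => ((hJd (B y) (hBpos y hy)).comp y (hB' y hy)).congr_deriv (by
          have := (hBpos y hy).ne'
          field_simp; ring)) hwn x hx
    have hBρ : Tendsto (fun x => B x / ρ x) atTop (nhds 1) := by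
      have := hρB0.inv₀ one_ne_zero
      rw [inv_one] at this
      exact this.congr fun y => inv_div _ _
    have h2 : Tendsto (fun y => (1 / (n:ℝ)) * (ρ y ^ n)⁻¹ - (1 / (n:ℝ)) * (B y ^ n)⁻¹) atTop
        (nhds ((1 / (n:ℝ)) * ((1 / k) / (1 - 1 / N) / N * 1 *
          ∑ i ∈ Finset.range n, (1:ℝ) ^ i))) := by
      have h3 := (((hwn.div_const (N:ℝ)).mul hBρ).mul
        (tendsto_finsetSum (Finset.range n) (fun i _ => hBρ.pow i))).const_mul (1 / (n:ℝ))
      refine h3.congr' ?_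
      filter_upwards [eventually_gt_atTop 0] with y hy
      have hb := (hBpos y hy).ne'
      have hr := (hρpos y).ne'
      rw [← mul_sub]
      congr 1
      have hg := mul_geom_sum (B y / ρ y) n
      have hBe : (B y - e y) / N = B y - ρ y := by rw [hρB y hy]; ring
      have h4 : (B y - e y) / B y ^ (n + 1) / N * (B y / ρ y) = (B y / ρ y - 1) / B y ^ n := by
        rw [div_right_comm, hBe, pow_succ]; field_simp
      rw [h4, div_mul_eq_mul_div, hg, div_pow]
      field_simp
    have h3 := h2.comp (tendsto_id.atTop_mul_const hx)
    have h4 := (h1.add h3).sub h2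
    rw [add_sub_cancel_right] at h4
    refine h4.congr fun α => ?_
    simp only [Function.comp, id, hρdef]
    ring
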